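/- Let R = R₁ ×_{R₀} R₂ be a fiber product of commutative rings, with ring homomorphisms R → R₁, R → R₂, R₁ → R₀, R₂ → R₀, where R₁ → R₀ is surjective. Let M₁ be a finitely generated projective R₁-module and M₂ a finitely generated projective R₂-module, and suppose there is an isomorphism M₁ ⊗_{R₁} R₀ ≅ M₂ ⊗_{R₂} R₀. Then the fiber product module M = M₁ ×_{M₀} M₂ is a finitely generated projective R-module with M ⊗_R Rᵢ ≅ Mᵢ for i = 1,2. -/

import Mathlib

/-!
The proof produces a finite dual basis of `M = M₁ ×_{M₀} M₂` that is explicit enough to give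
everything at once: elements `n_k ∈ M` and pairs of functionals `(g_k, f_k)` on `M₁` and `M₂`,
agreeing over `R₀` on `M`, such that `∑ g_k(x) π₁(n_k) = x` on all of `M₁` and
`∑ f_k(y) π₂(n_k) = y` on all of `M₂` (`exists_patched_dual_basis`). The pairs `(g_k, f_k)` define
functionals `M → R`, so `M` is a direct summand of a finite free module, and
`x ↦ ∑ g_k(x) ⊗ n_k` is inverse to the canonical map `R₁ ⊗ M → M₁`; likewise for `M₂`
(`nonempty_baseChange_equiv`).

To construct it, start from a dual basis `(y_k, f_k)` of `M₂`. Since `R₁ → R₀` is surjective, `y_k`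
lifts to a pair `(x_k, y_k) ∈ M`, and since `M₁` is moreover projective, `f_k` lifts to a compatible
pair `(g_k, f_k)`. On `M₂` this is already a dual basis; on `M₁` the error
`h = 1 - ∑ g_k ⊗ x_k` vanishes over `R₀`, so `(h x, 0) ∈ M` for every `x`. Now
`1 = (1 + h)(1 - h) + h²`: the first summand is `∑ g_k ⊗ (x_k + h x_k)`, and for a dual basis
`(x'_j, g'_j)` of `M₁` the second is `∑ (g'_j ∘ h) ⊗ h x'_j`, where `(h x'_j, 0) ∈ M` and
`g'_j ∘ h` vanishes over `R₀`. Hence `(x_k + h x_k, y_k), (g_k, f_k)` together with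
`(h x'_j, 0), (g'_j ∘ h, 0)` is the required system.
-/

open TensorProduct

section

variable {R1 R2 M1 M2 : Type*} [CommRing R1] [CommRing R2]
  [AddCommGroup M1] [AddCommGroup M2] [Module R1 M1] [Module R2 M2]

/-- The componentwise module structure of the product ring `R₁ × R₂` on
`M₁ × M₂`. -/
instance prodRingProdModule : Module (R1 × R2) (M1 × M2) where
  smul r m := (r.1 • m.1, r.2 • m.2)
  one_smul m := Prod.ext (one_smul _ _) (one_smul _ _)
  mul_smul r s m := Prod.ext (mul_smul _ _ _) (mul_smul _ _ _)
  smul_zero r := Prod.ext (smul_zero _) (smul_zero _)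
  smul_add r m n := Prod.ext (smul_add _ _ _) (smul_add _ _ _)
  add_smul r s m := Prod.ext (add_smul _ _ _) (add_smul _ _ _)
  zero_smul m := Prod.ext (zero_smul _ _) (zero_smul _ _)

/-- The fiber product `R = R₁ ×_{R₀} R₂` of commutative rings, as the subring of
`R₁ × R₂` of pairs whose images in `R₀` agree. -/
def fiberRing (R0 R1 R2 : Type*) [CommRing R0] [CommRing R1] [CommRing R2]
    [Algebra R1 R0] [Algebra R2 R0] : Subring (R1 × R2) where
  carrier := {x | algebraMap R1 R0 x.1 = algebraMap R2 R0 x.2}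
  zero_mem' := by simp
  one_mem' := by simp
  add_mem' := by
    intro a b ha hb
    simp only [Set.mem_setOf_eq, Prod.fst_add, Prod.snd_add, map_add] at *
    rw [ha, hb]
  neg_mem' := by
    intro a ha
    simp only [Set.mem_setOf_eq, Prod.fst_neg, Prod.snd_neg, map_neg] at *
    rw [ha]
  mul_mem' := by
    intro a b ha hb
    simp only [Set.mem_setOf_eq, Prod.fst_mul, Prod.snd_mul, map_mul] at *
    rw [ha, hb]

/-- `R₁` is an algebra over the fiber product `R = R₁ ×_{R₀} R₂`, via the first
projection. -/
noncomputable instance fiberRingAlgebraFst (R0 : Type*) [CommRing R0]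
    [Algebra R1 R0] [Algebra R2 R0] : Algebra (fiberRing R0 R1 R2) R1 :=
  ((RingHom.fst R1 R2).comp (fiberRing R0 R1 R2).subtype).toAlgebra

/-- `R₂` is an algebra over the fiber product `R = R₁ ×_{R₀} R₂`, via the second
projection. -/
noncomputable instance fiberRingAlgebraSnd (R0 : Type*) [CommRing R0]
    [Algebra R1 R0] [Algebra R2 R0] : Algebra (fiberRing R0 R1 R2) R2 :=
  ((RingHom.snd R1 R2).comp (fiberRing R0 R1 R2).subtype).toAlgebra

theorem exists_finite_dual_basis (R M : Type*) [CommRing R] [AddCommGroup M] [Module R M]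
    [Module.Finite R M] [Module.Projective R M] :
    ∃ (n : ℕ) (x : Fin n → M) (f : Fin n → M →ₗ[R] R), ∀ m, ∑ i, f i m • x i = m := by
  obtain ⟨n, p, s, -, -, h⟩ := Module.Finite.exists_comp_eq_id_of_projective R M
  refine ⟨n, fun i => p (Pi.single i 1), fun i => LinearMap.proj i ∘ₗ s, fun m => ?_⟩
  have h' : p (s m) = m := LinearMap.congr_fun h m
  conv_rhs => rw [← h', pi_eq_sum_univ' (s m), map_sum]
  refine Finset.sum_congr rfl fun i _ => ?_
  rw [map_smul]
  simp [Pi.single]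

theorem finite_projective_of_dual_basis {R M ι : Type*} [CommRing R] [AddCommGroup M] [Module R M]
    [Fintype ι] (n : ι → M) (φ : ι → M →ₗ[R] R) (h : ∀ m, ∑ i, φ i m • n i = m) :
    Module.Finite R M ∧ Module.Projective R M := by
  have hc : Fintype.linearCombination R n ∘ₗ LinearMap.pi φ = LinearMap.id := by
    ext m
    simpa [Fintype.linearCombination_apply] using h m
  refine ⟨Module.Finite.of_surjective (Fintype.linearCombination R n) fun m =>
    ⟨LinearMap.pi φ m, LinearMap.congr_fun hc m⟩, Module.Projective.of_split _ _ hc⟩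

/-- If a dual basis `(n, φ)` of the `R`-module `M` is carried by a semilinear map `p : M → N` to a
dual basis `(p ∘ n, g)` of the `S`-module `N`, then `N` is the base change of `M`: the map
`x ↦ ∑ g i x ⊗ n i` is inverse to `s ⊗ m ↦ s • p m`. -/
theorem nonempty_baseChange_equiv {R S M N ι : Type*} [CommRing R] [CommRing S] [Algebra R S]
    [AddCommGroup M] [Module R M] [AddCommGroup N] [Module S N] [Fintype ι]
    (p : M →ₛₗ[algebraMap R S] N) (n : ι → M) (φ : ι → M →ₗ[R] R) (g : ι → N →ₗ[S] S)
    (hφ : ∀ i m, algebraMap R S (φ i m) = g i (p m))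
    (hM : ∀ m, ∑ i, φ i m • n i = m) (hN : ∀ x, ∑ i, g i x • p (n i) = x) :
    Nonempty ((S ⊗[R] M) ≃ₗ[S] N) := by
  let _ : Module R N := Module.compHom N (algebraMap R S)
  have _ : IsScalarTower R S N := IsScalarTower.of_algebraMap_smul fun _ _ => rfl
  let p' : M →ₗ[R] N :=
    { toFun := p
      map_add' := map_add p
      map_smul' := fun r m => map_smulₛₗ p r m }
  let F : S ⊗[R] M →ₗ[S] N := p'.liftBaseChange S
  let G : N →ₗ[S] S ⊗[R] M :=
    ∑ i, (LinearMap.toSpanSingleton S (S ⊗[R] M) ((1 : S) ⊗ₜ[R] n i)) ∘ₗ g i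
  have hF (s : S) (m : M) : F (s ⊗ₜ m) = s • p m := rfl
  have hG (x : N) : G x = ∑ i, g i x ⊗ₜ[R] n i := by
    simp [G, LinearMap.sum_apply, TensorProduct.smul_tmul']
  refine ⟨LinearEquiv.ofLinearMap F G ?_ ?_⟩
  · ext x
    simpa [hG, hF] using hN x
  · refine LinearMap.ext fun t => ?_
    induction t with
    | zero => simp
    | add a b ha hb => rw [map_add, map_add, ha, hb]
    | tmul s m =>
      simp only [LinearMap.comp_apply, LinearMap.id_apply, hF, hG]
      conv_rhs => rw [← hM m, TensorProduct.tmul_sum]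
      refine Finset.sum_congr rfl fun i _ => ?_
      rw [← TensorProduct.smul_tmul, map_smul, ← hφ, smul_eq_mul, Algebra.smul_def, mul_comm]

theorem one_tmul_surjective {R S M : Type*} [CommRing R] [CommRing S] [Algebra R S]
    [AddCommGroup M] [Module R M] (h : Function.Surjective (algebraMap R S)) (t : S ⊗[R] M) :
    ∃ m : M, (1 : S) ⊗ₜ[R] m = t := by
  induction t with
  | zero => exact ⟨0, TensorProduct.tmul_zero _ _⟩
  | add a b ha hb =>
    obtain ⟨m, rfl⟩ := ha
    obtain ⟨m', rfl⟩ := hb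
    exact ⟨m + m', TensorProduct.tmul_add _ _ _⟩
  | tmul s m =>
    obtain ⟨r, rfl⟩ := h s
    exact ⟨r • m, by rw [← TensorProduct.smul_tmul, Algebra.smul_def, mul_one]⟩

theorem one_tmul_smul {R S M : Type*} [CommRing R] [CommRing S] [Algebra R S]
    [AddCommGroup M] [Module R M] (r : R) (m : M) :
    (1 : S) ⊗ₜ[R] (r • m) = algebraMap R S r • ((1 : S) ⊗ₜ[R] m) := by
  rw [← TensorProduct.smul_tmul, TensorProduct.smul_tmul', Algebra.smul_def, smul_eq_mul]

/-- The functional `S ⊗ M → S` obtained from a functional on `M` by base change. -/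
noncomputable def baseChangeFunctional {R M : Type*} (S : Type*) [CommRing R] [CommRing S]
    [Algebra R S] [AddCommGroup M] [Module R M] (f : M →ₗ[R] R) : S ⊗[R] M →ₗ[S] S :=
  (Algebra.linearMap R S ∘ₗ f).liftBaseChange S

theorem baseChangeFunctional_one_tmul {R S M : Type*} [CommRing R] [CommRing S]
    [Algebra R S] [AddCommGroup M] [Module R M] (f : M →ₗ[R] R) (m : M) :
    baseChangeFunctional S f ((1 : S) ⊗ₜ m) = algebraMap R S (f m) := by
  simp [baseChangeFunctional]

/-- The base change of a dual basis is a dual basis. -/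
theorem baseChange_dual_basis {R S M ι : Type*} [CommRing R] [CommRing S] [Algebra R S]
    [AddCommGroup M] [Module R M] [Fintype ι] (y : ι → M) (f : ι → M →ₗ[R] R)
    (h : ∀ m, ∑ i, f i m • y i = m) (t : S ⊗[R] M) :
    ∑ i, baseChangeFunctional S (f i) t • ((1 : S) ⊗ₜ[R] y i) = t := by
  induction t with
  | zero => simp
  | add a b ha hb => simp only [map_add, add_smul, Finset.sum_add_distrib, ha, hb]
  | tmul s m =>
    have hs : s ⊗ₜ[R] m = s • ((1 : S) ⊗ₜ[R] m) := by
      rw [TensorProduct.smul_tmul', smul_eq_mul, mul_one]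
    simp only [hs, map_smul, baseChangeFunctional_one_tmul, smul_assoc, ← one_tmul_smul]
    rw [← Finset.smul_sum, ← TensorProduct.tmul_sum, h]

/-- A system of elements `(a k, b k)` of the fiber product of `M₁` and `M₂`, with functionals
`(g k, f k)` compatible over `R₀`, that is a dual basis of `M₁` and of `M₂` simultaneously. -/
theorem exists_patched_dual_basis (R0 : Type*) [CommRing R0] [Algebra R1 R0] [Algebra R2 R0]
    (hsurj : Function.Surjective (algebraMap R1 R0))
    [Module.Finite R1 M1] [Module.Projective R1 M1]
    [Module.Finite R2 M2] [Module.Projective R2 M2]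
    (e : (R0 ⊗[R1] M1) ≃ₗ[R0] (R0 ⊗[R2] M2)) :
    ∃ (ι : Type) (_ : Fintype ι) (a : ι → M1) (b : ι → M2)
      (g : ι → M1 →ₗ[R1] R1) (f : ι → M2 →ₗ[R2] R2),
      (∀ i, e ((1 : R0) ⊗ₜ a i) = (1 : R0) ⊗ₜ b i) ∧
      (∀ i x y, e ((1 : R0) ⊗ₜ x) = (1 : R0) ⊗ₜ y →
        algebraMap R1 R0 (g i x) = algebraMap R2 R0 (f i y)) ∧
      (∀ x, ∑ i, g i x • a i = x) ∧ (∀ y, ∑ i, f i y • b i = y) := by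
  obtain ⟨m, x', g', h1⟩ := exists_finite_dual_basis R1 M1
  obtain ⟨n, y, f, h2⟩ := exists_finite_dual_basis R2 M2
  choose x hx using fun k => one_tmul_surjective hsurj (e.symm ((1 : R0) ⊗ₜ[R2] y k))
  have hx' (k) : e ((1 : R0) ⊗ₜ x k) = (1 : R0) ⊗ₜ y k := by rw [hx, e.apply_symm_apply]
  -- The functional on `M₁` with values in `R₀` induced by `f k` lifts to `R₁` by projectivity.
  choose g hg using fun k => Module.projective_lifting_property (Algebra.linearMap R1 R0)
    ((LinearMap.liftBaseChangeEquiv R0).symm (baseChangeFunctional R0 (f k) ∘ₗ e.toLinearMap))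
    hsurj
  have hg' (k) (z : M1) :
      algebraMap R1 R0 (g k z) = baseChangeFunctional R0 (f k) (e ((1 : R0) ⊗ₜ z)) :=
    LinearMap.congr_fun (hg k) z
  let h : M1 →ₗ[R1] M1 :=
    LinearMap.id - ∑ k, (LinearMap.toSpanSingleton R1 M1 (x k)) ∘ₗ g k
  have hh (z : M1) : h z = z - ∑ k, g k z • x k := by
    simp [h, LinearMap.sum_apply]
  have hh0 (z : M1) : (1 : R0) ⊗ₜ[R1] h z = 0 := by
    apply e.injective
    rw [hh, TensorProduct.tmul_sub, TensorProduct.tmul_sum, map_sub, map_sum, map_zero]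
    simp only [one_tmul_smul, map_smul, hg', hx']
    rw [baseChange_dual_basis y f h2, sub_self]
  refine ⟨Fin n ⊕ Fin m, inferInstance, Sum.elim (fun k => x k + h (x k)) (fun j => h (x' j)),
    Sum.elim y 0, Sum.elim g (fun j => g' j ∘ₗ h), Sum.elim f 0, ?_, ?_, ?_, ?_⟩
  · rintro (k | j)
    · simp [TensorProduct.tmul_add, hh0, hx']
    · simp [hh0]
  · rintro (k | j) z w hzw
    · simp [hg', hzw, baseChangeFunctional_one_tmul]
    · simp [← baseChangeFunctional_one_tmul, hh0]
  · intro z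
    have e1 : ∑ k, g k z • x k = z - h z := by rw [hh]; abel
    have e2 : ∑ k, g k z • h (x k) = h z - h (h z) := by
      rw [← map_sub, ← e1, map_sum]; simp only [map_smul]
    have e3 : ∑ j, g' j (h z) • h (x' j) = h (h z) := by
      conv_rhs => rw [← h1 (h z), map_sum]
      simp only [map_smul]
    simp only [Fintype.sum_sum_type, Sum.elim_inl, Sum.elim_inr, smul_add,
      Finset.sum_add_distrib, LinearMap.comp_apply, e1, e2, e3]
    abel
  · intro w
    simpa using h2 w

/-- **Milnor patching.** Let `R = R₁ ×_{R₀} R₂` be a fiber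
product of commutative rings with `R₁ → R₀` surjective.  Given finitely
generated projective modules `M₁` over `R₁` and `M₂` over `R₂` together with an
isomorphism `e : M₁ ⊗_{R₁} R₀ ≅ M₂ ⊗_{R₂} R₀` of the base changes, the fiber
product module `M = M₁ ×_{M₀} M₂` (the submodule of `M₁ × M₂` of pairs whose
base changes are identified by `e`) is a finitely generated projective
`R`-module with `M ⊗_R Rᵢ ≅ Mᵢ` for `i = 1, 2`. -/
theorem stmt_17 (R0 : Type*) [CommRing R0] [Algebra R1 R0] [Algebra R2 R0]
    (hsurj : Function.Surjective (algebraMap R1 R0))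
    [Module.Finite R1 M1] [Module.Projective R1 M1]
    [Module.Finite R2 M2] [Module.Projective R2 M2]
    (e : (R0 ⊗[R1] M1) ≃ₗ[R0] (R0 ⊗[R2] M2)) :
    ∃ M : Submodule (fiberRing R0 R1 R2) (M1 × M2),
      (M : Set (M1 × M2)) =
        {x : M1 × M2 | e ((1 : R0) ⊗ₜ x.1) = (1 : R0) ⊗ₜ x.2} ∧
      Module.Finite (fiberRing R0 R1 R2) M ∧
      Module.Projective (fiberRing R0 R1 R2) M ∧
      Nonempty ((R1 ⊗[fiberRing R0 R1 R2] M) ≃ₗ[R1] M1) ∧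
      Nonempty ((R2 ⊗[fiberRing R0 R1 R2] M) ≃ₗ[R2] M2) := by
  obtain ⟨ι, _, a, b, g, f, hab, hgf, h1, h2⟩ := exists_patched_dual_basis R0 hsurj e
  let M : Submodule (fiberRing R0 R1 R2) (M1 × M2) :=
    { carrier := {x | e ((1 : R0) ⊗ₜ x.1) = (1 : R0) ⊗ₜ x.2}
      zero_mem' := by simp
      add_mem' := by
        intro x y hx hy
        simp only [Set.mem_ofPred_eq, Prod.fst_add, Prod.snd_add, TensorProduct.tmul_add,
          map_add] at *
        rw [hx, hy]
      smul_mem' := by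
        rintro ⟨⟨r, s⟩, hrs⟩ ⟨x, y⟩ hxy
        change e ((1 : R0) ⊗ₜ x) = (1 : R0) ⊗ₜ y at hxy
        change algebraMap R1 R0 r = algebraMap R2 R0 s at hrs
        change e ((1 : R0) ⊗ₜ (r • x)) = (1 : R0) ⊗ₜ (s • y)
        rw [one_tmul_smul, one_tmul_smul, map_smul, hxy, hrs] }
  let n : ι → M := fun i => ⟨(a i, b i), hab i⟩
  let φ : ι → M →ₗ[fiberRing R0 R1 R2] fiberRing R0 R1 R2 := fun i =>
    { toFun := fun z => ⟨(g i z.1.1, f i z.1.2), hgf i _ _ z.2⟩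
      map_add' := fun z w => Subtype.ext (Prod.ext (map_add (g i) _ _) (map_add (f i) _ _))
      map_smul' := fun r z =>
        Subtype.ext (Prod.ext (map_smul (g i) r.1.1 _) (map_smul (f i) r.1.2 _)) }
  let p1 : M →ₛₗ[algebraMap (fiberRing R0 R1 R2) R1] M1 :=
    { toFun := fun z => z.1.1
      map_add' := fun _ _ => rfl
      map_smul' := fun _ _ => rfl }
  let p2 : M →ₛₗ[algebraMap (fiberRing R0 R1 R2) R2] M2 :=
    { toFun := fun z => z.1.2
      map_add' := fun _ _ => rfl
      map_smul' := fun _ _ => rfl }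
  have hp1 (z : M) : p1 (∑ i, φ i z • n i) = p1 z := by
    rw [map_sum]
    exact h1 _
  have hp2 (z : M) : p2 (∑ i, φ i z • n i) = p2 z := by
    rw [map_sum]
    exact h2 _
  have hM (z : M) : ∑ i, φ i z • n i = z := Subtype.ext (Prod.ext (hp1 z) (hp2 z))
  obtain ⟨hfin, hproj⟩ := finite_projective_of_dual_basis n φ hM
  exact ⟨M, rfl, hfin, hproj,
    nonempty_baseChange_equiv p1 n φ g (fun _ _ => rfl) hM h1,
    nonempty_baseChange_equiv p2 n φ f (fun _ _ => rfl) hM h2⟩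

end
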